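/- arXiv:0812.3529 — 3 statements merged into one kernel-verified Lean document; each statement's English description precedes it below -/
import Mathlib

section
/- Fix ε > 0 and n ≥ 1. Let L : ℝ^n × ℝ^n × ℝ → ℝ be continuously differentiable and x : ℝ → ℝ^n continuous. Set G(t) = ∂₁L(x(t), d⁺_ε x(t), t) and F(t) = ∂₂L(x(t), d⁺_ε x(t), t). Then the following are equivalent: (i) for every h ∈ C_c^∞(ℝ, ℝ^n), ∫_ℝ [G(t)·h(t) + F(t)·d⁺_ε h(t)] dt = 0; (ii) for every t ∈ ℝ, G(t) = d⁻_ε F(t). (This is the anti-causal Euler–Lagrange equation obtained when trajectory and variations evolve in the same temporal direction past → future.) -/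
open MeasureTheory
open scoped RealInnerProductSpace

noncomputable section

/-- Backward (left) finite difference: `d⁺_ε f t = (f t − f (t − ε)) / ε`. -/
def backwardDiff {n : ℕ} (ε : ℝ) (f : ℝ → EuclideanSpace ℝ (Fin n)) (t : ℝ) :
    EuclideanSpace ℝ (Fin n) :=
  ε⁻¹ • (f t - f (t - ε))

/-- Forward (right) finite difference: `d⁻_ε f t = (f (t + ε) − f t) / ε`. -/
def forwardDiff {n : ℕ} (ε : ℝ) (f : ℝ → EuclideanSpace ℝ (Fin n)) (t : ℝ) :
    EuclideanSpace ℝ (Fin n) :=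
  ε⁻¹ • (f (t + ε) - f t)

/-- `∂₁L(x,v,t)`: gradient of `L` with respect to its first `ℝ^n` argument. -/
def grad1 {n : ℕ} (L : EuclideanSpace ℝ (Fin n) × EuclideanSpace ℝ (Fin n) × ℝ → ℝ)
    (x v : EuclideanSpace ℝ (Fin n)) (t : ℝ) : EuclideanSpace ℝ (Fin n) :=
  gradient (fun y => L (y, v, t)) x

/-- `∂₂L(x,v,t)`: gradient of `L` with respect to its second `ℝ^n` argument. -/
def grad2 {n : ℕ} (L : EuclideanSpace ℝ (Fin n) × EuclideanSpace ℝ (Fin n) × ℝ → ℝ)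
    (x v : EuclideanSpace ℝ (Fin n)) (t : ℝ) : EuclideanSpace ℝ (Fin n) :=
  gradient (fun w => L (x, w, t)) v

/-!
A discrete summation by parts, which is just translation invariance of Lebesgue measure, moves the
finite difference from the variation `h` onto the momentum `F` and turns the first variation into
`∫ ⟪G - d⁻_ε F, h⟫`. Since `G` and `F` are continuous, the fundamental lemma of the calculus of
variations then forces `G - d⁻_ε F` to vanish everywhere.
-/

open scoped Gradient ContDiff

section InnerIntegral

variable {𝕜 X E : Type*} [RCLike 𝕜] [NormedAddCommGroup E] [InnerProductSpace 𝕜 E]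
  [TopologicalSpace X] [MeasurableSpace X] [OpensMeasurableSpace X]
  {μ : Measure X} [IsFiniteMeasureOnCompacts μ]

theorem integrable_inner_of_hasCompactSupport_right {f h : X → E} (hf : Continuous f)
    (hh : Continuous h) (hh_supp : HasCompactSupport h) :
    Integrable (fun t => inner 𝕜 (f t) (h t)) μ := by
  refine (hf.inner hh).integrable_of_hasCompactSupport (hh_supp.mono fun t ht hht => ht ?_)
  simp only [hht, inner_zero_right]

end InnerIntegral

section FundamentalLemma

variable {V E : Type*} [NormedAddCommGroup V] [NormedSpace ℝ V] [FiniteDimensional ℝ V]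
  [MeasurableSpace V] [BorelSpace V] {μ : Measure V} [IsLocallyFiniteMeasure μ]
  [μ.IsOpenPosMeasure] [NormedAddCommGroup E] [InnerProductSpace ℝ E]

theorem eq_zero_of_forall_integral_inner_eq_zero {f : V → E} (hf : Continuous f)
    (hint : ∀ h : V → E, ContDiff ℝ ∞ h → HasCompactSupport h → ∫ t, ⟪f t, h t⟫ ∂μ = 0) :
    f = 0 := by
  have inner_eq_zero (v : E) : (fun t => ⟪f t, v⟫) = 0 := by
    have hfv : Continuous fun t => ⟪f t, v⟫ := hf.inner continuous_const
    refine (hfv.ae_eq_iff_eq μ continuous_const).1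
      (ae_eq_zero_of_integral_contDiff_smul_eq_zero hfv.locallyIntegrable fun g hg hg_supp => ?_)
    simpa only [inner_smul_right, smul_eq_mul] using
      hint (fun t => g t • v) (hg.smul contDiff_const) hg_supp.smul_right
  ext1 t
  exact ext_inner_right ℝ fun v => by simpa using congrFun (inner_eq_zero v) t

end FundamentalLemma

section PartialGradient

variable {𝕜 P E : Type*} [RCLike 𝕜] [NormedAddCommGroup P] [NormedSpace 𝕜 P]
  [NormedAddCommGroup E] [InnerProductSpace 𝕜 E] [CompleteSpace E]

theorem continuous_gradient_of_contDiff_uncurry {f : P → E → 𝕜}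
    (hf : ContDiff 𝕜 1 (Function.uncurry f)) :
    Continuous fun q : P × E => ∇ (f q.1) q.2 := by
  have hf' : ContDiff 𝕜 1 (Function.uncurry fun q : P × E => f q.1) :=
    hf.comp (contDiff_fst.fst.prodMk contDiff_snd)
  exact (InnerProductSpace.toDual 𝕜 E).symm.continuous.comp
    (hf'.fderiv (n := 0) contDiff_snd (by simp)).continuous

end PartialGradient

section DifferenceQuotient

variable {E : Type*} [AddCommGroup E] [Module ℝ E]

/-- The backward difference quotient `d⁺_ε f`, as `backwardDiff` but with values in any real
vector space; it is the junk value `0` at `ε = 0`. -/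
def backwardQuotient (ε : ℝ) (f : ℝ → E) (t : ℝ) : E :=
  ε⁻¹ • (f t - f (t - ε))

/-- The forward difference quotient `d⁻_ε f`, as `forwardDiff` but with values in any real
vector space; it is the junk value `0` at `ε = 0`. Up to sign it is the `L²`-adjoint of
`backwardQuotient`. -/
def forwardQuotient (ε : ℝ) (f : ℝ → E) (t : ℝ) : E :=
  ε⁻¹ • (f (t + ε) - f t)

theorem hasCompactSupport_backwardQuotient {ε : ℝ} {h : ℝ → E} (hh : HasCompactSupport h) :
    HasCompactSupport (backwardQuotient ε h) :=
  (hh.sub (hh.comp_homeomorph (Homeomorph.subRight ε))).smul_left (f := fun _ => ε⁻¹)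

variable [TopologicalSpace E] [IsTopologicalAddGroup E] [ContinuousConstSMul ℝ E]

theorem continuous_backwardQuotient {ε : ℝ} {f : ℝ → E} (hf : Continuous f) :
    Continuous (backwardQuotient ε f) := by
  unfold backwardQuotient
  fun_prop

theorem continuous_forwardQuotient {ε : ℝ} {f : ℝ → E} (hf : Continuous f) :
    Continuous (forwardQuotient ε f) := by
  unfold forwardQuotient
  fun_prop

end DifferenceQuotient

section FirstVariation

variable {E : Type*} [NormedAddCommGroup E] [InnerProductSpace ℝ E] {ε : ℝ} {F G h : ℝ → E}

theorem integral_inner_backwardQuotient (hFh : Integrable fun t => ⟪F t, h t⟫)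
    (hFh_shift : Integrable fun t => ⟪F (t + ε), h t⟫) :
    ∫ t, ⟪F t, backwardQuotient ε h t⟫ = -∫ t, ⟪forwardQuotient ε F t, h t⟫ := by
  have hFh_shift' : Integrable fun t => ⟪F t, h (t - ε)⟫ := by
    simpa only [sub_add_cancel] using hFh_shift.comp_sub_right ε
  have integral_shift : ∫ t, ⟪F t, h (t - ε)⟫ = ∫ t, ⟪F (t + ε), h t⟫ := by
    simpa only [sub_add_cancel] using
      integral_sub_right_eq_self (μ := volume) (fun t => ⟪F (t + ε), h t⟫) ε
  calc ∫ t, ⟪F t, backwardQuotient ε h t⟫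
      = ε⁻¹ * ((∫ t, ⟪F t, h t⟫) - ∫ t, ⟪F t, h (t - ε)⟫) := by
        simp only [backwardQuotient, inner_smul_right, inner_sub_right]
        rw [integral_const_mul, integral_sub hFh hFh_shift']
    _ = -(ε⁻¹ * ((∫ t, ⟪F (t + ε), h t⟫) - ∫ t, ⟪F t, h t⟫)) := by
        rw [integral_shift]
        ring
    _ = -∫ t, ⟪forwardQuotient ε F t, h t⟫ := by
        simp only [forwardQuotient, real_inner_smul_left, inner_sub_left]
        rw [integral_const_mul, integral_sub hFh_shift hFh]

theorem integral_inner_add_inner_backwardQuotient (hG : Continuous G) (hF : Continuous F)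
    (hh : Continuous h) (hh_supp : HasCompactSupport h) :
    ∫ t, (⟪G t, h t⟫ + ⟪F t, backwardQuotient ε h t⟫) =
      ∫ t, ⟪G t - forwardQuotient ε F t, h t⟫ := by
  have integrable_inner {f : ℝ → E} (hf : Continuous f) : Integrable fun t => ⟪f t, h t⟫ :=
    integrable_inner_of_hasCompactSupport_right hf hh hh_supp
  have integrable_inner_backwardQuotient : Integrable fun t => ⟪F t, backwardQuotient ε h t⟫ :=
    integrable_inner_of_hasCompactSupport_right hF (continuous_backwardQuotient hh)
      (hasCompactSupport_backwardQuotient hh_supp)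
  simp only [inner_sub_left]
  rw [integral_add (integrable_inner hG) integrable_inner_backwardQuotient,
    integral_sub (integrable_inner hG) (integrable_inner (continuous_forwardQuotient hF)),
    integral_inner_backwardQuotient (integrable_inner hF)
      (integrable_inner (hF.comp (continuous_add_const ε))), sub_eq_add_neg]

theorem forall_integral_inner_add_inner_backwardQuotient_eq_zero_iff
    (hG : Continuous G) (hF : Continuous F) :
    (∀ h : ℝ → E, ContDiff ℝ ∞ h → HasCompactSupport h →
        ∫ t, (⟪G t, h t⟫ + ⟪F t, backwardQuotient ε h t⟫) = 0) ↔
      ∀ t, G t = forwardQuotient ε F t := by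
  constructor
  · intro stationary t
    have hGF : (fun t => G t - forwardQuotient ε F t) = 0 :=
      eq_zero_of_forall_integral_inner_eq_zero (μ := volume)
        (hG.sub (continuous_forwardQuotient hF)) fun h hh hh_supp => by
          rw [← integral_inner_add_inner_backwardQuotient hG hF hh.continuous hh_supp]
          exact stationary h hh hh_supp
    exact sub_eq_zero.1 (congrFun hGF t)
  · intro equation h hh hh_supp
    rw [integral_inner_add_inner_backwardQuotient hG hF hh.continuous hh_supp]
    simp [equation]

end FirstVariation

theorem anticausal_euler_lagrange_forward_general {E : Type*} [NormedAddCommGroup E]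
    [InnerProductSpace ℝ E] [CompleteSpace E] {ε : ℝ} (_hε : ε ≠ 0)
    {L : E × E × ℝ → ℝ} (hL : ContDiff ℝ 1 L) {x : ℝ → E} (hx : Continuous x)
    {G : ℝ → E} (hG : G = fun t => ∇ (fun y => L (y, backwardQuotient ε x t, t)) (x t))
    {F : ℝ → E} (hF : F = fun t => ∇ (fun w => L (x t, w, t)) (backwardQuotient ε x t)) :
    (∀ h : ℝ → E, ContDiff ℝ ∞ h → HasCompactSupport h →
        ∫ t, (⟪G t, h t⟫ + ⟪F t, backwardQuotient ε h t⟫) = 0) ↔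
      ∀ t, G t = forwardQuotient ε F t := by
  have hv : Continuous (backwardQuotient ε x) := continuous_backwardQuotient hx
  have hG_cont : Continuous G := by
    have grad_cont := continuous_gradient_of_contDiff_uncurry
      (f := fun (p : E × ℝ) y => L (y, p.1, p.2)) (hL.comp (by fun_prop))
    exact hG ▸ grad_cont.comp ((hv.prodMk continuous_id).prodMk hx)
  have hF_cont : Continuous F := by
    have grad_cont := continuous_gradient_of_contDiff_uncurry
      (f := fun (p : E × ℝ) w => L (p.1, w, p.2)) (hL.comp (by fun_prop))
    exact hF ▸ grad_cont.comp ((hx.prodMk continuous_id).prodMk hv)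
  exact forall_integral_inner_add_inner_backwardQuotient_eq_zero_iff hG_cont hF_cont

/-- anti-causal Euler–Lagrange equation, obtained when the trajectory
and the variations evolve in the same temporal direction past → future.
With `G = ∂₁L(x, d⁺_ε x, ·)` and `F = ∂₂L(x, d⁺_ε x, ·)`, the trajectory is an
extremal with respect to variations entering via `d⁺_ε h` if and only if
`G = d⁻_ε F` everywhere. -/
theorem anticausal_euler_lagrange_forward
    (ε : ℝ) (hε : 0 < ε) (n : ℕ) (hn : 1 ≤ n)
    (L : EuclideanSpace ℝ (Fin n) × EuclideanSpace ℝ (Fin n) × ℝ → ℝ)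
    (hL : ContDiff ℝ 1 L)
    (x : ℝ → EuclideanSpace ℝ (Fin n)) (hx : Continuous x)
    (G : ℝ → EuclideanSpace ℝ (Fin n))
    (hG : G = fun t => grad1 L (x t) (backwardDiff ε x t) t)
    (F : ℝ → EuclideanSpace ℝ (Fin n))
    (hF : F = fun t => grad2 L (x t) (backwardDiff ε x t) t) :
    (∀ h : ℝ → EuclideanSpace ℝ (Fin n),
        ContDiff ℝ (⊤ : ℕ∞) h → HasCompactSupport h →
        (∫ t : ℝ, (⟪G t, h t⟫ + ⟪F t, backwardDiff ε h t⟫)) = 0) ↔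
    (∀ t : ℝ, G t = forwardDiff ε F t) :=
  anticausal_euler_lagrange_forward_general hε.ne' hL hx hG hF

end
end

section
/- Let n ≥ 1, let F, G, P⁺, P⁻ : ℝ → ℝ^n be functions with G, P⁺, P⁻ continuous, and let D⁺, D⁻ : C_c^∞(ℝ, ℝ^n) → (ℝ → ℝ^n) be maps such that for every h ∈ C_c^∞(ℝ, ℝ^n) the functions t ↦ F(t)·(D⁺h)(t) and t ↦ F(t)·(D⁻h)(t) are integrable on ℝ and the integration-by-parts identities ∫_ℝ F(t)·(D⁻h)(t) dt = − ∫_ℝ P⁺(t)·h(t) dt and ∫_ℝ F(t)·(D⁺h)(t) dt = − ∫_ℝ P⁻(t)·h(t) dt hold. Then the following are equivalent: (i) for all h₊, h₋ ∈ C_c^∞(ℝ, ℝ^n), ∫_ℝ [G(t)·(h₊(t)+h₋(t)) + F(t)·((D⁺h₊)(t)+(D⁻h₋)(t))] dt = 0; (ii) for every t ∈ ℝ, G(t) = P⁺(t) and G(t) = P⁻(t). (Abstract form of the two-directional variational theorem: an extremal over all variation pairs must satisfy both generalized Euler–Lagrange equations, with P⁺ playing the role of D⁺F and P⁻ of D⁻F.)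 -/
open MeasureTheory
open scoped RealInnerProductSpace

/-!
Integration by parts turns the variational integral at `(h₊, h₋)` into
`∫ (G - P⁻) · h₊ + ∫ (G - P⁺) · h₋`. The two variations are independent, so switching off one of
them at a time leaves two one-directional problems, each settled by the fundamental lemma of the
calculus of variations.
-/

theorem integrable_inner_of_hasCompactSupport_right_s8 {𝕜 X V : Type*} [RCLike 𝕜]
    [TopologicalSpace X] [MeasurableSpace X] [OpensMeasurableSpace X]
    [SeminormedAddCommGroup V] [InnerProductSpace 𝕜 V]
    {μ : Measure X} [IsFiniteMeasureOnCompacts μ] {f h : X → V}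
    (hf : Continuous f) (hh : Continuous h) (hsupp : HasCompactSupport h) :
    Integrable (fun x => inner 𝕜 (f x) (h x)) μ := by
  have hsupp_inner : HasCompactSupport fun x => inner 𝕜 (f x) (h x) :=
    hsupp.mono fun x hx hzero => hx (by simp only [hzero, inner_zero_right])
  exact (hf.inner hh).integrable_of_hasCompactSupport hsupp_inner

section Variational

open scoped ContDiff

variable {E V W : Type*} [NormedAddCommGroup E] [NormedSpace ℝ E] [MeasurableSpace E]
  [NormedAddCommGroup V] [InnerProductSpace ℝ V]
  [NormedAddCommGroup W] [InnerProductSpace ℝ W]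
  {μ : Measure E}

theorem eq_of_forall_integral_inner_contDiff_eq [FiniteDimensional ℝ E] [BorelSpace E]
    [IsLocallyFiniteMeasure μ] [μ.IsOpenPosMeasure]
    {f g : E → V} (hf : Continuous f) (hg : Continuous g)
    (hfg : ∀ h : E → V, ContDiff ℝ ∞ h → HasCompactSupport h →
      ∫ x, ⟪f x, h x⟫ ∂μ = ∫ x, ⟪g x, h x⟫ ∂μ) :
    f = g := by
  have inner_eq (c : V) : (fun x => ⟪f x, c⟫) = fun x => ⟪g x, c⟫ := by
    have hfc : Continuous fun x => ⟪f x, c⟫ := hf.inner continuous_const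
    have hgc : Continuous fun x => ⟪g x, c⟫ := hg.inner continuous_const
    refine (hfc.ae_eq_iff_eq μ hgc).1 <|
      ae_eq_of_integral_contDiff_smul_eq hfc.locallyIntegrable hgc.locallyIntegrable ?_
    intro φ hφ hφsupp
    simpa only [inner_smul_right, smul_eq_mul] using
      hfg (fun x => φ x • c) (hφ.smul contDiff_const) hφsupp.smul_right
  funext x
  exact ext_inner_right ℝ fun c => congrFun (inner_eq c) x

/-- The integration-by-parts relation `∫ F · D h = -∫ P · h` against all smooth compactly supported
`h`, so that `P` plays the role of the derivative of `F` dual to the operator `D`. Integrability of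
`F · D h` is included, as the Bochner integral of a non-integrable function is `0`. The values of
`D` outside the smooth compactly supported functions are irrelevant. -/
structure IntegrationByParts (μ : Measure E) (F : E → W) (D : (E → V) → E → W) (P : E → V) :
    Prop where
  integrable : ∀ h : E → V, ContDiff ℝ ∞ h → HasCompactSupport h →
    Integrable (fun x => ⟪F x, D h x⟫) μ
  integral_eq : ∀ h : E → V, ContDiff ℝ ∞ h → HasCompactSupport h →
    ∫ x, ⟪F x, D h x⟫ ∂μ = -∫ x, ⟪P x, h x⟫ ∂μ

variable {F : E → W} {G Pp Pm : E → V} {Dp Dm : (E → V) → E → W}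

theorem IntegrationByParts.integral_variation_pair [OpensMeasurableSpace E]
    [IsFiniteMeasureOnCompacts μ] (hG : Continuous G)
    (hDp : IntegrationByParts μ F Dp Pm) (hDm : IntegrationByParts μ F Dm Pp)
    {hp hm : E → V} (hp_smooth : ContDiff ℝ ∞ hp) (hp_supp : HasCompactSupport hp)
    (hm_smooth : ContDiff ℝ ∞ hm) (hm_supp : HasCompactSupport hm) :
    ∫ x, (⟪G x, hp x + hm x⟫ + ⟪F x, Dp hp x + Dm hm x⟫) ∂μ =
      (∫ x, ⟪G x, hp x⟫ ∂μ - ∫ x, ⟪Pm x, hp x⟫ ∂μ) +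
        (∫ x, ⟪G x, hm x⟫ ∂μ - ∫ x, ⟪Pp x, hm x⟫ ∂μ) := by
  have hGp : Integrable (fun x => ⟪G x, hp x⟫) μ :=
    integrable_inner_of_hasCompactSupport_right_s8 hG hp_smooth.continuous hp_supp
  have hGm : Integrable (fun x => ⟪G x, hm x⟫) μ :=
    integrable_inner_of_hasCompactSupport_right_s8 hG hm_smooth.continuous hm_supp
  have hFp := hDp.integrable hp hp_smooth hp_supp
  have hFm := hDm.integrable hm hm_smooth hm_supp
  simp only [inner_add_right]
  rw [integral_add (hGp.fun_add hGm) (hFp.fun_add hFm), integral_add hGp hGm, integral_add hFp hFm,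
    hDp.integral_eq hp hp_smooth hp_supp, hDm.integral_eq hm hm_smooth hm_supp]
  ring

theorem abstract_two_directional_variational_general [FiniteDimensional ℝ E] [BorelSpace E]
    [IsLocallyFiniteMeasure μ] [μ.IsOpenPosMeasure]
    (hG : Continuous G) (hPp : Continuous Pp) (hPm : Continuous Pm)
    (hDp : IntegrationByParts μ F Dp Pm) (hDm : IntegrationByParts μ F Dm Pp) :
    (∀ hp hm : E → V, ContDiff ℝ ∞ hp → HasCompactSupport hp →
      ContDiff ℝ ∞ hm → HasCompactSupport hm →
      ∫ x, (⟪G x, hp x + hm x⟫ + ⟪F x, Dp hp x + Dm hm x⟫) ∂μ = 0) ↔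
    ∀ x, G x = Pp x ∧ G x = Pm x := by
  have zero_smooth : ContDiff ℝ ∞ (0 : E → V) := contDiff_const
  have zero_supp : HasCompactSupport (0 : E → V) := .zero
  constructor
  · intro extremal
    have hGPp : G = Pp := by
      refine eq_of_forall_integral_inner_contDiff_eq (μ := μ) hG hPp fun h smooth supp => ?_
      simpa [sub_eq_zero] using
        (hDp.integral_variation_pair hG hDm zero_smooth zero_supp smooth supp).symm.trans
          (extremal 0 h zero_smooth zero_supp smooth supp)
    have hGPm : G = Pm := by
      refine eq_of_forall_integral_inner_contDiff_eq (μ := μ) hG hPm fun h smooth supp => ?_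
      simpa [sub_eq_zero] using
        (hDp.integral_variation_pair hG hDm smooth supp zero_smooth zero_supp).symm.trans
          (extremal h 0 smooth supp zero_smooth zero_supp)
    exact fun x => ⟨congrFun hGPp x, congrFun hGPm x⟩
  · intro eulerLagrange hp hm hp_smooth hp_supp hm_smooth hm_supp
    obtain rfl : G = Pp := funext fun x => (eulerLagrange x).1
    obtain rfl : G = Pm := funext fun x => (eulerLagrange x).2
    rw [hDp.integral_variation_pair hG hDm hp_smooth hp_supp hm_smooth hm_supp,
      sub_self, sub_self, add_zero]

end Variational

/-- abstract form of the two-directional variational theorem.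
Given `F, G, P⁺, P⁻ : ℝ → ℝ^n` with `G`, `P⁺`, `P⁻` continuous and operators
`D⁺`, `D⁻` on variations satisfying the integration-by-parts identities
`∫ F · D⁻ h = − ∫ P⁺ · h` and `∫ F · D⁺ h = − ∫ P⁻ · h` (with the corresponding
integrability), extremality over all variation pairs `(h₊, h₋)` is equivalent to
both generalized Euler–Lagrange equations `G = P⁺` and `G = P⁻` on `ℝ`. -/
theorem abstract_two_directional_variational
    (n : ℕ) (hn : 1 ≤ n)
    (F G Pp Pm : ℝ → EuclideanSpace ℝ (Fin n))
    (hG : Continuous G) (hPp : Continuous Pp) (hPm : Continuous Pm)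
    (Dp Dm : (ℝ → EuclideanSpace ℝ (Fin n)) → (ℝ → EuclideanSpace ℝ (Fin n)))
    (hIntp : ∀ h : ℝ → EuclideanSpace ℝ (Fin n),
        ContDiff ℝ (⊤ : ℕ∞) h → HasCompactSupport h →
        Integrable (fun t : ℝ => ⟪F t, Dp h t⟫))
    (hIntm : ∀ h : ℝ → EuclideanSpace ℝ (Fin n),
        ContDiff ℝ (⊤ : ℕ∞) h → HasCompactSupport h →
        Integrable (fun t : ℝ => ⟪F t, Dm h t⟫))
    (hIBPp : ∀ h : ℝ → EuclideanSpace ℝ (Fin n),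
        ContDiff ℝ (⊤ : ℕ∞) h → HasCompactSupport h →
        (∫ t : ℝ, ⟪F t, Dm h t⟫) = - ∫ t : ℝ, ⟪Pp t, h t⟫)
    (hIBPm : ∀ h : ℝ → EuclideanSpace ℝ (Fin n),
        ContDiff ℝ (⊤ : ℕ∞) h → HasCompactSupport h →
        (∫ t : ℝ, ⟪F t, Dp h t⟫) = - ∫ t : ℝ, ⟪Pm t, h t⟫) :
    (∀ hp hm : ℝ → EuclideanSpace ℝ (Fin n),
        ContDiff ℝ (⊤ : ℕ∞) hp → HasCompactSupport hp →
        ContDiff ℝ (⊤ : ℕ∞) hm → HasCompactSupport hm →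
        (∫ t : ℝ, (⟪G t, hp t + hm t⟫ + ⟪F t, Dp hp t + Dm hm t⟫)) = 0) ↔
    (∀ t : ℝ, G t = Pp t ∧ G t = Pm t) :=
  abstract_two_directional_variational_general hG hPp hPm ⟨hIntp, hIBPm⟩ ⟨hIntm, hIBPp⟩
end

section
/- Let a < b be real numbers, n ≥ 1, L : ℝ^n × ℝ^n × ℝ → ℝ continuously differentiable, and x : ℝ → ℝ^n continuously differentiable. Assume the function F(t) = ∂₂L(x(t), x'(t), t) is continuously differentiable on [a,b]. Then the following are equivalent: (i) for every smooth h : ℝ → ℝ^n with compact support contained in the open interval (a,b), ∫_a^b [∂₁L(x(t), x'(t), t)·h(t) + F(t)·h'(t)] dt = 0; (ii) for every t ∈ [a,b], ∂₁L(x(t), x'(t), t) = F'(t). (This is the classical-derivative instance of the variational theorem: extremality of the action under compactly supported variations is equivalent to the classical Euler–Lagrange equation.) -/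
open MeasureTheory
open scoped RealInnerProductSpace

noncomputable section

/-!
Since a variation `h` vanishes at the endpoints, integrating `⟪F, h'⟫` by parts turns the first
variation of the action into `∫ ⟪∂₁L - F', h⟫`. This vanishes for all `h` exactly when
`∂₁L - F' = 0` on `(a, b)`, by the fundamental lemma of the calculus of variations, and continuity
of `∂₁L` and `F'` carries the equation to the endpoints.
-/

section PartialGradient

variable {𝕜 E P : Type*} [RCLike 𝕜] [NormedAddCommGroup E] [InnerProductSpace 𝕜 E]
  [CompleteSpace E] [NormedAddCommGroup P] [NormedSpace 𝕜 P]

theorem gradient_prodMk_left {L : E × P → 𝕜} {x : E} {p : P}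
    (hL : DifferentiableAt 𝕜 L (x, p)) :
    gradient (fun y => L (y, p)) x =
      (InnerProductSpace.toDual 𝕜 E).symm
        ((fderiv 𝕜 L (x, p)).comp (ContinuousLinearMap.inl 𝕜 E P)) :=
  (hL.hasFDerivAt.comp x (hasFDerivAt_prodMk_left x p)).hasGradientAt.gradient

theorem continuous_gradient_prodMk_left {L : E × P → 𝕜} (hL : ContDiff 𝕜 1 L) :
    Continuous fun q : E × P => gradient (fun y => L (y, q.2)) q.1 := by
  simp only [gradient_prodMk_left (hL.differentiable one_ne_zero _)]
  exact (LinearIsometryEquiv.continuous _).comp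
    ((hL.continuous_fderiv one_ne_zero).clm_comp continuous_const)

end PartialGradient

section FundamentalLemma

open Set

variable {a b : ℝ}

theorem eqOn_zero_of_integral_contDiff_smul_eq_zero {E : Type*} [NormedAddCommGroup E]
    [NormedSpace ℝ E] [CompleteSpace E] {f : ℝ → E} (hab : a < b)
    (hf : ContinuousOn f (Icc a b))
    (h_int : ∀ g : ℝ → ℝ, ContDiff ℝ (⊤ : ℕ∞) g → tsupport g ⊆ Ioo a b →
      ∫ t in a..b, g t • f t = 0) :
    EqOn f 0 (Icc a b) := by
  have h_ae : ∀ᵐ t, t ∈ Ioo a b → f t = 0 := by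
    refine isOpen_Ioo.ae_eq_zero_of_integral_contDiff_smul_eq_zero
      ((hf.mono Ioo_subset_Icc_self).locallyIntegrableOn measurableSet_Ioo)
      fun g hg _ hg_supp => ?_
    have h_supp : (fun t => g t • f t).support ⊆ Ioc a b :=
      (Function.support_smul_subset_left g f).trans
        ((subset_tsupport g).trans (hg_supp.trans Ioo_subset_Ioc_self))
    rw [← intervalIntegral.integral_eq_integral_of_support_subset h_supp, h_int g hg hg_supp]
  have h_ae_restrict : f =ᵐ[volume.restrict (Icc a b)] 0 := by
    rw [← restrict_Ioo_eq_restrict_Icc]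
    exact (ae_restrict_iff' measurableSet_Ioo).2 h_ae
  exact Measure.eqOn_Icc_of_ae_eq volume hab.ne h_ae_restrict hf continuousOn_const

variable {E : Type*} [NormedAddCommGroup E] [InnerProductSpace ℝ E]

theorem forall_integral_inner_contDiff_eq_zero_iff_eqOn_zero {f : ℝ → E} (hab : a < b)
    (hf : ContinuousOn f (Icc a b)) :
    (∀ h : ℝ → E, ContDiff ℝ (⊤ : ℕ∞) h → tsupport h ⊆ Ioo a b →
      ∫ t in a..b, ⟪f t, h t⟫ = 0) ↔ EqOn f 0 (Icc a b) := by
  constructor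
  · intro h_int t ht
    refine ext_inner_right ℝ fun e => ?_
    have h_inner : EqOn (fun s => ⟪f s, e⟫) 0 (Icc a b) := by
      refine eqOn_zero_of_integral_contDiff_smul_eq_zero hab (hf.inner continuousOn_const)
        fun g hg hg_supp => ?_
      simpa only [inner_smul_right, smul_eq_mul] using
        h_int (fun s => g s • e) (hg.smul contDiff_const)
          ((tsupport_smul_subset_left g fun _ => e).trans hg_supp)
    simpa only [Pi.zero_apply, inner_zero_left] using h_inner ht
  · intro hf_zero h _ _
    have h_inner : EqOn (fun t => ⟪f t, h t⟫) 0 (uIcc a b) := fun t ht => by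
      simp [hf_zero (uIcc_of_le hab.le ▸ ht)]
    simpa using intervalIntegral.integral_congr h_inner

end FundamentalLemma

section IntegrationByParts

open Set

variable {E : Type*} [NormedAddCommGroup E] [InnerProductSpace ℝ E] {a b : ℝ}

theorem integral_inner_deriv_add_deriv_inner_eq_sub {u v u' v' : ℝ → E}
    (hu : ∀ t ∈ uIcc a b, HasDerivWithinAt u (u' t) (uIcc a b) t)
    (hv : ∀ t ∈ uIcc a b, HasDerivWithinAt v (v' t) (uIcc a b) t)
    (hu' : ContinuousOn u' (uIcc a b)) (hv' : ContinuousOn v' (uIcc a b)) :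
    ∫ t in a..b, (⟪u t, v' t⟫ + ⟪u' t, v t⟫) = ⟪u b, v b⟫ - ⟪u a, v a⟫ := by
  have hu_cont : ContinuousOn u (uIcc a b) := fun t ht => (hu t ht).continuousWithinAt
  have hv_cont : ContinuousOn v (uIcc a b) := fun t ht => (hv t ht).continuousWithinAt
  refine intervalIntegral.integral_eq_sub_of_hasDeriv_right (f := fun t => ⟪u t, v t⟫)
    (hu_cont.inner hv_cont) (fun t ht => ?_)
    ((hu_cont.inner hv').add (hu'.inner hv_cont)).intervalIntegrable
  have ht_mem : t ∈ uIcc a b := Ioo_subset_Icc_self ht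
  have ht_nhds : uIcc a b ∈ nhds t := Icc_mem_nhds ht.1 ht.2
  exact (((hu t ht_mem).hasDerivAt ht_nhds).inner ℝ
    ((hv t ht_mem).hasDerivAt ht_nhds)).hasDerivWithinAt

variable {G F F' : ℝ → E}

theorem integral_inner_add_inner_deriv_eq_integral_sub_inner {h : ℝ → E} (hab : a ≤ b)
    (hG : ContinuousOn G (Icc a b))
    (hF : ∀ t ∈ Icc a b, HasDerivWithinAt F (F' t) (Icc a b) t)
    (hF' : ContinuousOn F' (Icc a b)) (hh : ContDiff ℝ 1 h) (ha : h a = 0) (hb : h b = 0) :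
    ∫ t in a..b, (⟪G t, h t⟫ + ⟪F t, deriv h t⟫) = ∫ t in a..b, ⟪G t - F' t, h t⟫ := by
  rw [← uIcc_of_le hab] at hG hF hF'
  have hF_cont : ContinuousOn F (uIcc a b) := fun t ht => (hF t ht).continuousWithinAt
  have hh_cont : ContinuousOn h (uIcc a b) := hh.continuous.continuousOn
  have hdh_cont : ContinuousOn (deriv h) (uIcc a b) :=
    (hh.continuous_deriv le_rfl).continuousOn
  have h_parts : ∫ t in a..b, (⟪F t, deriv h t⟫ + ⟪F' t, h t⟫) = 0 := by
    rw [integral_inner_deriv_add_deriv_inner_eq_sub hF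
      (fun t _ => (hh.differentiable one_ne_zero t).hasDerivAt.hasDerivWithinAt) hF' hdh_cont,
      ha, hb, inner_zero_right, inner_zero_right, sub_zero]
  calc ∫ t in a..b, (⟪G t, h t⟫ + ⟪F t, deriv h t⟫)
      = ∫ t in a..b, (⟪G t - F' t, h t⟫ + (⟪F t, deriv h t⟫ + ⟪F' t, h t⟫)) := by
        congr 1 with t
        rw [inner_sub_left]
        ring
    _ = (∫ t in a..b, ⟪G t - F' t, h t⟫) +
          ∫ t in a..b, (⟪F t, deriv h t⟫ + ⟪F' t, h t⟫) :=
        intervalIntegral.integral_add ((hG.sub hF').inner hh_cont).intervalIntegrable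
          ((hF_cont.inner hdh_cont).add (hF'.inner hh_cont)).intervalIntegrable
    _ = ∫ t in a..b, ⟪G t - F' t, h t⟫ := by rw [h_parts, add_zero]

theorem forall_integral_inner_add_inner_deriv_eq_zero_iff (hab : a < b)
    (hG : ContinuousOn G (Icc a b))
    (hF : ∀ t ∈ Icc a b, HasDerivWithinAt F (F' t) (Icc a b) t)
    (hF' : ContinuousOn F' (Icc a b)) :
    (∀ h : ℝ → E, ContDiff ℝ (⊤ : ℕ∞) h → tsupport h ⊆ Ioo a b →
      ∫ t in a..b, (⟪G t, h t⟫ + ⟪F t, deriv h t⟫) = 0) ↔ EqOn G F' (Icc a b) := by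
  have h_parts : ∀ h : ℝ → E, ContDiff ℝ (⊤ : ℕ∞) h → tsupport h ⊆ Ioo a b →
      ∫ t in a..b, (⟪G t, h t⟫ + ⟪F t, deriv h t⟫) = ∫ t in a..b, ⟪G t - F' t, h t⟫ := by
    intro h hh h_supp
    refine integral_inner_add_inner_deriv_eq_integral_sub_inner hab.le hG hF hF'
      (hh.of_le (by simp)) ?_ ?_
    · exact image_eq_zero_of_notMem_tsupport fun ha => left_notMem_Ioo (h_supp ha)
    · exact image_eq_zero_of_notMem_tsupport fun hb => right_notMem_Ioo (h_supp hb)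
  calc (∀ h : ℝ → E, ContDiff ℝ (⊤ : ℕ∞) h → tsupport h ⊆ Ioo a b →
        ∫ t in a..b, (⟪G t, h t⟫ + ⟪F t, deriv h t⟫) = 0)
      ↔ ∀ h : ℝ → E, ContDiff ℝ (⊤ : ℕ∞) h → tsupport h ⊆ Ioo a b →
        ∫ t in a..b, ⟪G t - F' t, h t⟫ = 0 :=
        forall₃_congr fun h hh h_supp => by rw [h_parts h hh h_supp]
    _ ↔ EqOn (G - F') 0 (Icc a b) :=
        forall_integral_inner_contDiff_eq_zero_iff_eqOn_zero hab (hG.sub hF')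
    _ ↔ EqOn G F' (Icc a b) := forall₂_congr fun _ _ => sub_eq_zero

end IntegrationByParts

theorem classical_euler_lagrange_general {E : Type*} [NormedAddCommGroup E]
    [InnerProductSpace ℝ E] [CompleteSpace E] {a b : ℝ} (hab : a < b)
    {L : E × E × ℝ → ℝ} (hL : ContDiff ℝ 1 L) {x : ℝ → E} (hx : ContDiff ℝ 1 x) {F' : ℝ → E}
    (hF' : ∀ t ∈ Set.Icc a b,
      HasDerivWithinAt (fun s => gradient (fun w => L (x s, w, s)) (deriv x s)) (F' t)
        (Set.Icc a b) t)
    (hF'c : ContinuousOn F' (Set.Icc a b)) :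
    (∀ h : ℝ → E, ContDiff ℝ (⊤ : ℕ∞) h → tsupport h ⊆ Set.Ioo a b →
        ∫ t in a..b, (⟪gradient (fun y => L (y, deriv x t, t)) (x t), h t⟫ +
          ⟪gradient (fun w => L (x t, w, t)) (deriv x t), deriv h t⟫) = 0) ↔
    ∀ t ∈ Set.Icc a b, gradient (fun y => L (y, deriv x t, t)) (x t) = F' t := by
  have h_lift : Continuous fun t => (x t, deriv x t, t) :=
    hx.continuous.prodMk ((hx.continuous_deriv le_rfl).prodMk continuous_id)
  have h_grad : Continuous fun t => gradient (fun y => L (y, deriv x t, t)) (x t) :=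
    (continuous_gradient_prodMk_left hL).comp h_lift
  exact forall_integral_inner_add_inner_deriv_eq_zero_iff hab h_grad.continuousOn hF' hF'c

/-- classical-derivative instance of the variational theorem.
With `F(t) = ∂₂L(x t, x' t, t)` continuously differentiable on `[a,b]` (with
derivative `F'`), the action is extremal under all smooth variations compactly
supported in `(a,b)` if and only if the classical Euler–Lagrange equation
`∂₁L(x t, x' t, t) = F' t` holds on `[a,b]`. -/
theorem classical_euler_lagrange
    (a b : ℝ) (hab : a < b) (n : ℕ) (hn : 1 ≤ n)
    (L : EuclideanSpace ℝ (Fin n) × EuclideanSpace ℝ (Fin n) × ℝ → ℝ)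
    (hL : ContDiff ℝ 1 L)
    (x : ℝ → EuclideanSpace ℝ (Fin n)) (hx : ContDiff ℝ 1 x)
    (F : ℝ → EuclideanSpace ℝ (Fin n))
    (hF : F = fun t => grad2 L (x t) (deriv x t) t)
    (F' : ℝ → EuclideanSpace ℝ (Fin n))
    (hF' : ∀ t ∈ Set.Icc a b, HasDerivWithinAt F (F' t) (Set.Icc a b) t)
    (hF'c : ContinuousOn F' (Set.Icc a b)) :
    (∀ h : ℝ → EuclideanSpace ℝ (Fin n),
        ContDiff ℝ (⊤ : ℕ∞) h → tsupport h ⊆ Set.Ioo a b →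
        (∫ t in a..b, (⟪grad1 L (x t) (deriv x t) t, h t⟫ + ⟪F t, deriv h t⟫)) = 0) ↔
    (∀ t ∈ Set.Icc a b, grad1 L (x t) (deriv x t) t = F' t) := by
  subst hF
  exact classical_euler_lagrange_general hab hL hx hF' hF'c

end
end
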